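/- Let (p_k)_{k≥0} be a critical offspring distribution with variance σ² ∈ (0,∞) and pgf Φ. Then μ′ = ∑_{n≥1} q_n·log n is finite and satisfies μ′ = −γ − ∫_0^1 log log(Φ(η)/η) dη, where γ is Euler's constant. -/

import Mathlib

/-!
If `T` has law `q` and `E` is an independent standard exponential variable, then
`exp (-E / T)` has distribution function `y(z) = ∑ q_n z^n` on `[0, 1]`. Hence
`∫ y'(z) log (-log z) dz = 𝔼 [log (E / T)] = -γ - ∑ q_n log n`, because `𝔼 [log E] = Γ'(1) = -γ`.
Substituting `η = y(z)`, for which the fixed-point equation reads `Φ(η) / η = 1 / z`, turns the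
left-hand side into `∫ log (log (Φ(η) / η)) dη`.

The sums and integrals converge because `log (Φ(η) / η)` lies between `p_0 (1 - η)^2` and `-log η`.
The lower bound rests on the mean offspring number being at most one, and this is forced by `y`
reaching the value `1`: then `Φ(η) > η` on `(0, 1)`, whereas the mean is the limit of
`(1 - Φ(η)) / (1 - η)` as `η` tends to `1`.
-/

open Filter MeasureTheory Set Topology
open Real (log exp eulerMascheroniConstant)

theorem integral_log_mul_exp_neg_Ioi :
    ∫ t in Ioi (0 : ℝ), log t * exp (-t) = -eulerMascheroniConstant := by
  have hGamma : HasDerivAt Complex.GammaIntegral (-(eulerMascheroniConstant : ℂ)) 1 := by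
    refine Complex.hasDerivAt_Gamma_one.congr_of_eventuallyEq ?_
    filter_upwards [(isOpen_lt continuous_const Complex.continuous_re).mem_nhds
      (show (0 : ℝ) < (1 : ℂ).re by simp)] with s hs
    exact (Complex.Gamma_eq_integral hs).symm
  have h := (Complex.hasDerivAt_GammaIntegral (s := 1) (by simp)).unique hGamma
  simp only [sub_self, Complex.cpow_zero, one_mul] at h
  rw [← Complex.ofReal_inj, ← integral_complex_ofReal]
  simpa using h

theorem integral_log_neg_log : ∫ w in (0 : ℝ)..1, log (-log w) = -eulerMascheroniConstant := by
  have himage : (fun t : ℝ ↦ exp (-t)) '' Ioi 0 = Ioo 0 1 := by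
    rw [← image_image exp, image_neg_Ioi, neg_zero, Real.image_exp_Iio, Real.exp_zero]
  rw [intervalIntegral.integral_of_le zero_le_one, integral_Ioc_eq_integral_Ioo, ← himage,
    integral_image_eq_integral_deriv_smul_of_antitoneOn (f' := fun t ↦ -exp (-t)) measurableSet_Ioi
      (fun t _ ↦ by simpa using (hasDerivAt_neg t).exp.hasDerivWithinAt)
      (fun s _ t _ hst ↦ by simpa using hst),
    ← integral_log_mul_exp_neg_Ioi]
  simp [mul_comm]

theorem intervalIntegrable_log_neg_log :
    IntervalIntegrable (fun w ↦ log (-log w)) volume 0 1 := by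
  apply intervalIntegral.intervalIntegrable_of_integral_ne_zero
  rw [integral_log_neg_log]
  linarith [Real.one_half_lt_eulerMascheroniConstant]

theorem integral_log_neg_log_mul_deriv_pow {n : ℕ} (hn : n ≠ 0) :
    ∫ z in (0 : ℝ)..1, log (-log z) * (n * z ^ (n - 1)) = -eulerMascheroniConstant - log n := by
  have hlog : ∀ z ∈ Ioo (0 : ℝ) 1, log (-log z) = log (-log (z ^ n)) - log n := by
    intro z hz
    rw [Real.log_pow, ← mul_neg, Real.log_mul (by exact_mod_cast hn)
      (neg_pos.2 (Real.log_neg hz.1 hz.2)).ne', add_sub_cancel_left]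
  calc ∫ z in (0 : ℝ)..1, log (-log z) * (n * z ^ (n - 1))
    _ = ∫ z in (0 : ℝ)..1,
          ((fun w ↦ log (-log w) - log n) ∘ fun z ↦ z ^ n) z * (n * z ^ (n - 1)) :=
        intervalIntegral.integral_congr_Ioo_of_le zero_le_one fun z hz ↦
          congrArg (· * (n * z ^ (n - 1))) (hlog z hz)
    _ = ∫ w in (0 : ℝ)..1, (log (-log w) - log n) := by
        rw [intervalIntegral.integral_comp_mul_deriv_of_deriv_nonneg (by fun_prop)
          (fun z _ ↦ hasDerivAt_pow n z), zero_pow hn, one_pow]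
        intro z hz
        rw [min_eq_left zero_le_one] at hz
        exact mul_nonneg n.cast_nonneg (pow_nonneg hz.1.le _)
    _ = -eulerMascheroniConstant - log n := by
        rw [intervalIntegral.integral_sub intervalIntegrable_log_neg_log
          intervalIntegrable_const, integral_log_neg_log]
        simp

theorem nat_mul_pow_pred_le_inv_one_sub (n : ℕ) {x : ℝ} (hx0 : 0 ≤ x) (hx1 : x < 1) :
    n * x ^ (n - 1) ≤ (1 - x)⁻¹ := by
  calc n * x ^ (n - 1)
    _ ≤ ∑ i ∈ Finset.range n, x ^ i := by
        simpa using Finset.card_nsmul_le_sum (Finset.range n) (x ^ ·) (x ^ (n - 1)) fun i hi ↦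
          pow_le_pow_of_le_one hx0 hx1.le (Nat.le_sub_one_of_lt (Finset.mem_range.1 hi))
    _ ≤ ∑' i, x ^ i :=
        (summable_geometric_of_lt_one hx0 hx1).sum_le_tsum _ fun i _ ↦ pow_nonneg hx0 i
    _ = (1 - x)⁻¹ := tsum_geometric_of_lt_one hx0 hx1

theorem hasSum_of_tsum_eq_of_ne_zero {ι M : Type*} [AddCommMonoid M] [TopologicalSpace M]
    {f : ι → M} {s : M} (h : ∑' i, f i = s) (hs : s ≠ 0) : HasSum f s :=
  h ▸ (not_imp_comm.1 tsum_eq_zero_of_not_summable (h.trans_ne hs)).hasSum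

/-- The generating function `z ↦ ∑ aₙ zⁿ` of a real sequence, as a function of a real variable;
when `a` is a probability law on `ℕ` this is its probability generating function. -/
noncomputable def genFun (a : ℕ → ℝ) (z : ℝ) : ℝ := ∑' n, a n * z ^ n

section GenFun

variable {a : ℕ → ℝ} {z : ℝ}

theorem norm_mul_pow_le_norm (n : ℕ) (hz : |z| ≤ 1) : ‖a n * z ^ n‖ ≤ ‖a n‖ := by
  rw [norm_mul, norm_pow]
  exact mul_le_of_le_one_right (norm_nonneg _) (pow_le_one₀ (norm_nonneg z) hz)

theorem hasSum_genFun (ha : Summable a) (hz : |z| ≤ 1) :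
    HasSum (fun n ↦ a n * z ^ n) (genFun a z) :=
  (Summable.of_norm_bounded ha.norm fun n ↦ norm_mul_pow_le_norm n hz).hasSum

theorem continuousOn_genFun (ha : Summable a) : ContinuousOn (genFun a) (Icc (-1) 1) :=
  continuousOn_tsum (fun n ↦ by fun_prop) ha.norm fun n _ hz ↦ norm_mul_pow_le_norm n (abs_le.2 hz)

theorem norm_mul_deriv_pow_le (n : ℕ) {r : ℝ} (hzr : |z| ≤ r) (hr : r < 1) :
    ‖a n * (n * z ^ (n - 1))‖ ≤ ‖a n‖ * (1 - r)⁻¹ := by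
  rw [norm_mul, norm_mul, norm_pow, Real.norm_natCast, Real.norm_eq_abs z]
  gcongr
  calc n * |z| ^ (n - 1)
    _ ≤ n * r ^ (n - 1) := by gcongr
    _ ≤ (1 - r)⁻¹ := nat_mul_pow_pred_le_inv_one_sub n ((abs_nonneg z).trans hzr) hr

theorem summable_mul_deriv_pow (ha : Summable a) (hz : |z| < 1) :
    Summable fun n : ℕ ↦ a n * (n * z ^ (n - 1)) :=
  .of_norm_bounded (ha.norm.mul_right _) fun n ↦ norm_mul_deriv_pow_le n le_rfl hz

theorem hasDerivAt_genFun (ha : Summable a) (hz : |z| < 1) :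
    HasDerivAt (genFun a) (∑' n, a n * (n * z ^ (n - 1))) z := by
  obtain ⟨r, hzr, hr1⟩ := exists_between hz
  exact hasDerivAt_tsum_of_isPreconnected (ha.norm.mul_right (1 - r)⁻¹) isOpen_Ioo
    isPreconnected_Ioo (fun n y _ ↦ (hasDerivAt_pow n y).const_mul (a n))
    (fun n y hy ↦ norm_mul_deriv_pow_le n (abs_lt.2 hy).le hr1) (abs_lt.1 hzr)
    (hasSum_genFun ha hz.le).summable (abs_lt.1 hzr)

theorem hasSum_deriv_genFun (ha : Summable a) (hz : |z| < 1) :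
    HasSum (fun n : ℕ ↦ a n * (n * z ^ (n - 1))) (deriv (genFun a) z) := by
  rw [(hasDerivAt_genFun ha hz).deriv]
  exact (summable_mul_deriv_pow ha hz).hasSum

theorem hasDerivAt_deriv_genFun (ha : Summable a) (hz : z ∈ Ioo (0 : ℝ) 1) :
    HasDerivAt (genFun a) (deriv (genFun a) z) z :=
  (hasDerivAt_genFun ha ((abs_of_pos hz.1).trans_lt hz.2)).differentiableAt.hasDerivAt

theorem deriv_genFun_nonneg (ha0 : ∀ n, 0 ≤ a n) (ha : Summable a) (hz : z ∈ Ioo (0 : ℝ) 1) :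
    0 ≤ deriv (genFun a) z :=
  (hasSum_deriv_genFun ha ((abs_of_pos hz.1).trans_lt hz.2)).nonneg fun n ↦
    mul_nonneg (ha0 n) (mul_nonneg n.cast_nonneg (pow_nonneg hz.1.le _))

theorem continuousOn_genFun_uIcc_zero_one (ha : Summable a) :
    ContinuousOn (genFun a) (uIcc 0 1) := by
  rw [uIcc_of_le zero_le_one]
  exact (continuousOn_genFun ha).mono (Icc_subset_Icc_left (by norm_num))

theorem genFun_zero (a : ℕ → ℝ) : genFun a 0 = a 0 := by
  rw [genFun, tsum_eq_single 0 fun n hn ↦ by simp [hn]]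
  simp

theorem genFun_one (a : ℕ → ℝ) : genFun a 1 = ∑' n, a n := by simp [genFun]

theorem genFun_le_tsum (ha0 : ∀ n, 0 ≤ a n) (ha : Summable a) (hz : z ∈ Icc (0 : ℝ) 1) :
    genFun a z ≤ ∑' n, a n :=
  hasSum_le (fun n ↦ mul_le_of_le_one_right (ha0 n) (pow_le_one₀ hz.1 hz.2))
    (hasSum_genFun ha ((abs_of_nonneg hz.1).trans_le hz.2)) ha.hasSum

theorem genFun_pos (ha0 : ∀ n, 0 ≤ a n) (ha : 0 < ∑' n, a n) (hz : z ∈ Ioc (0 : ℝ) 1) :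
    0 < genFun a z := by
  have hs : Summable a := (hasSum_of_tsum_eq_of_ne_zero rfl ha.ne').summable
  obtain ⟨n, hn⟩ : ∃ n, a n ≠ 0 := by
    by_contra! h
    simp [h] at ha
  exact (hasSum_genFun hs ((abs_of_pos hz.1).trans_le hz.2)).summable.tsum_pos
    (fun k ↦ mul_nonneg (ha0 k) (pow_nonneg hz.1.le k)) n
    (mul_pos ((ha0 n).lt_of_ne' hn) (pow_pos hz.1 n))

theorem intervalIntegrable_comp_genFun_mul_deriv_iff (ha0 : ∀ n, 0 ≤ a n) (ha : Summable a)
    {g : ℝ → ℝ} :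
    IntervalIntegrable (fun z ↦ g (genFun a z) * deriv (genFun a) z) volume 0 1 ↔
      IntervalIntegrable g volume (a 0) (∑' n, a n) := by
  rw [← genFun_zero a, ← genFun_one a]
  exact intervalIntegral.integrable_comp_mul_deriv_iff_of_deriv_nonneg
    (continuousOn_genFun_uIcc_zero_one ha)
    (fun z hz ↦ hasDerivAt_deriv_genFun ha (by simpa using hz))
    fun z hz ↦ deriv_genFun_nonneg ha0 ha (by simpa using hz)

theorem integral_comp_genFun_mul_deriv (ha0 : ∀ n, 0 ≤ a n) (ha : Summable a) (g : ℝ → ℝ) :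
    ∫ z in (0 : ℝ)..1, g (genFun a z) * deriv (genFun a) z =
      ∫ x in (a 0)..(∑' n, a n), g x := by
  rw [← genFun_zero a, ← genFun_one a]
  exact intervalIntegral.integral_comp_mul_deriv_of_deriv_nonneg
    (continuousOn_genFun_uIcc_zero_one ha)
    (fun z hz ↦ hasDerivAt_deriv_genFun ha (by simpa using hz))
    fun z hz ↦ deriv_genFun_nonneg ha0 ha (by simpa using hz)

theorem hasSum_mul_integral_mul_deriv_pow (ha0 : ∀ n, 0 ≤ a n) (ha : Summable a) {g : ℝ → ℝ}
    (hg : Measurable g)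
    (hint : IntervalIntegrable (fun z ↦ g z * deriv (genFun a) z) volume 0 1) :
    HasSum (fun n ↦ a n * ∫ z in (0 : ℝ)..1, g z * (n * z ^ (n - 1)))
      (∫ z in (0 : ℝ)..1, g z * deriv (genFun a) z) := by
  have hsum {z : ℝ} (hz : z ∈ Ioo (0 : ℝ) 1) (b : ℝ) :
      HasSum (fun n ↦ b * (a n * (n * z ^ (n - 1)))) (b * deriv (genFun a) z) :=
    (hasSum_deriv_genFun ha ((abs_of_pos hz.1).trans_lt hz.2)).mul_left b
  have hIoo {P : ℝ → Prop} (h : ∀ z ∈ Ioo (0 : ℝ) 1, P z) : ∀ᵐ z, z ∈ uIoc (0 : ℝ) 1 → P z := by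
    filter_upwards [Measure.ae_ne volume 1] with z hz1 hz
    rw [uIoc_of_le zero_le_one] at hz
    exact h z ⟨hz.1, hz.2.lt_of_ne hz1⟩
  have h := intervalIntegral.hasSum_integral_of_dominated_convergence (μ := volume)
    (F := fun n z ↦ g z * (a n * (n * z ^ (n - 1))))
    (fun n z ↦ ‖g z‖ * (a n * (n * z ^ (n - 1)))) (fun n ↦ by fun_prop)
    (fun n ↦ hIoo fun z hz ↦ ?_) (hIoo fun z hz ↦ (hsum hz ‖g z‖).summable) ?_
    (hIoo fun z hz ↦ hsum hz (g z))
  · simpa only [← intervalIntegral.integral_const_mul, mul_left_comm] using h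
  · have hz0 := hz.1.le
    rw [norm_mul, Real.norm_of_nonneg (mul_nonneg (ha0 n) (by positivity))]
  · refine hint.norm.congr_uIoo fun z hz ↦ ?_
    rw [uIoo_of_le zero_le_one] at hz
    beta_reduce
    rw [(hsum hz ‖g z‖).tsum_eq, norm_mul, Real.norm_of_nonneg (deriv_genFun_nonneg ha0 ha hz)]

theorem hasSum_mul_log_of_intervalIntegrable (ha0 : ∀ n, 0 ≤ a n) (ha : Summable a) (h0 : a 0 = 0)
    (hint : IntervalIntegrable (fun z ↦ log (-log z) * deriv (genFun a) z) volume 0 1) :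
    HasSum (fun n ↦ a n * log n) (-eulerMascheroniConstant * ∑' n, a n -
      ∫ z in (0 : ℝ)..1, log (-log z) * deriv (genFun a) z) := by
  have hterm (n : ℕ) : a n * log n = -eulerMascheroniConstant * a n -
      a n * ∫ z in (0 : ℝ)..1, log (-log z) * (n * z ^ (n - 1)) := by
    rcases eq_or_ne n 0 with rfl | hn
    · simp [h0]
    · rw [integral_log_neg_log_mul_deriv_pow hn]
      ring
  simp only [hterm]
  exact (ha.hasSum.mul_left _).sub
    (hasSum_mul_integral_mul_deriv_pow ha0 ha (by fun_prop) hint)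

end GenFun

section Offspring

variable {p : ℕ → ℝ}

theorem genFun_le_self_of_zero (hp : ∀ k, 0 ≤ p k) (hp1 : HasSum p 1) (hp0 : p 0 = 0) {x : ℝ}
    (hx : x ∈ Icc (0 : ℝ) 1) : genFun p x ≤ x := by
  refine hasSum_le (fun k ↦ ?_)
    (hasSum_genFun hp1.summable ((abs_of_nonneg hx.1).trans_le hx.2))
    (one_mul x ▸ hp1.mul_right x)
  rcases eq_or_ne k 0 with rfl | hk
  · simp [hp0]
  · exact mul_le_mul_of_nonneg_left (pow_le_of_le_one hx.1 hx.2 hk) (hp k)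

theorem mean_le_one_of_self_le_genFun (hp : ∀ k, 0 ≤ p k) (hp1 : HasSum p 1)
    (hself : ∀ x ∈ Ioo (0 : ℝ) 1, x ≤ genFun p x) :
    Summable (fun k : ℕ ↦ k * p k) ∧ ∑' k : ℕ, k * p k ≤ 1 := by
  have hslope (s : Finset ℕ) {x : ℝ} (hx : x ∈ Ioo (0 : ℝ) 1) :
      ∑ k ∈ s, p k * ∑ i ∈ Finset.range k, x ^ i ≤ 1 := by
    have hgap : HasSum (fun k ↦ p k * (1 - x ^ k)) (1 - genFun p x) := by
      simpa only [mul_sub, mul_one] using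
        hp1.sub (hasSum_genFun hp1.summable ((abs_of_pos hx.1).trans_le hx.2.le))
    refine le_of_mul_le_mul_left ?_ (sub_pos.2 hx.2)
    calc (1 - x) * ∑ k ∈ s, p k * ∑ i ∈ Finset.range k, x ^ i
      _ = ∑ k ∈ s, p k * (1 - x ^ k) := by
          simp only [Finset.mul_sum s, mul_left_comm (1 - x), mul_neg_geom_sum]
      _ ≤ 1 - genFun p x := sum_le_hasSum s
          (fun k _ ↦ mul_nonneg (hp k) (sub_nonneg.2 (pow_le_one₀ hx.1.le hx.2.le))) hgap
      _ ≤ (1 - x) * 1 := by linarith [hself x hx]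
  have hpartial (s : Finset ℕ) : ∑ k ∈ s, k * p k ≤ 1 := by
    have hlim : Tendsto (fun x : ℝ ↦ ∑ k ∈ s, p k * ∑ i ∈ Finset.range k, x ^ i) (𝓝[<] 1)
        (𝓝 (∑ k ∈ s, k * p k)) :=
      ((by fun_prop : Continuous _).tendsto' 1 _ (by simp [mul_comm])).mono_left nhdsWithin_le_nhds
    exact le_of_tendsto hlim
      (eventually_of_mem (Ioo_mem_nhdsLT zero_lt_one) fun x hx ↦ hslope s hx)
  have hnonneg (k : ℕ) : 0 ≤ k * p k := mul_nonneg k.cast_nonneg (hp k)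
  exact ⟨summable_of_sum_le hnonneg hpartial, Real.tsum_le_of_sum_le hnonneg hpartial⟩

theorem one_sub_sq_sub_le_pow {k : ℕ} (hk : k ≠ 0) {x : ℝ} (hx : x ∈ Icc (0 : ℝ) 1) :
    1 - (1 - x) ^ 2 - k * (x * (1 - x)) ≤ x ^ k := by
  induction k, Nat.one_le_iff_ne_zero.2 hk using Nat.le_induction with
  | base => exact le_of_eq (by push_cast; ring)
  | succ k hk1 ih =>
    have hdrop : 0 ≤ (x - x ^ k) * (1 - x) := mul_nonneg
      (sub_nonneg.2 (pow_le_of_le_one hx.1 hx.2 (Nat.one_le_iff_ne_zero.1 hk1)))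
      (sub_nonneg.2 hx.2)
    push_cast
    linarith [ih (Nat.one_le_iff_ne_zero.1 hk1), pow_succ x k]

theorem mul_one_sub_sq_le_genFun_sub_self (hp : ∀ k, 0 ≤ p k) (hp1 : HasSum p 1)
    (hmean : Summable fun k : ℕ ↦ k * p k) (hmean1 : ∑' k : ℕ, k * p k ≤ 1) {x : ℝ}
    (hx : x ∈ Icc (0 : ℝ) 1) : p 0 * (1 - x) ^ 2 ≤ genFun p x - x := by
  have hsum := ((hasSum_genFun hp1.summable ((abs_of_nonneg hx.1).trans_le hx.2)).sub
    (hp1.mul_right (1 - (1 - x) ^ 2))).add (hmean.hasSum.mul_right (x * (1 - x)))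
  have hzero := le_hasSum hsum 0 fun k hk ↦ by
    have := mul_le_mul_of_nonneg_left (one_sub_sq_sub_le_pow hk hx) (hp k)
    linarith
  have hslope : (∑' k : ℕ, k * p k) * (x * (1 - x)) ≤ 1 * (x * (1 - x)) :=
    mul_le_mul_of_nonneg_right hmean1 (mul_nonneg hx.1 (sub_nonneg.2 hx.2))
  simp only [pow_zero, Nat.cast_zero, zero_mul, add_zero] at hzero
  linarith

theorem intervalIntegrable_log_of_mul_sq_le_of_le_neg_log {L : ℝ → ℝ} {c : ℝ} (hc : 0 < c)
    (hL : ContinuousOn L (Ioo 0 1)) (hlow : ∀ x ∈ Ioo (0 : ℝ) 1, c * (1 - x) ^ 2 ≤ L x)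
    (hup : ∀ x ∈ Ioo (0 : ℝ) 1, L x ≤ -log x) :
    IntervalIntegrable (fun x ↦ log (L x)) volume 0 1 := by
  have hpos {x : ℝ} (hx : x ∈ Ioo (0 : ℝ) 1) : 0 < c * (1 - x) ^ 2 :=
    mul_pos hc (pow_pos (sub_pos.2 hx.2) 2)
  have hlog_one_sub : IntervalIntegrable (fun x ↦ log (1 - x)) volume 0 1 := by
    simpa using (intervalIntegral.intervalIntegrable_log' (a := 1) (b := 0)).comp_sub_left 1
  have hlow_int := (intervalIntegrable_const (c := log c)).add (hlog_one_sub.const_mul 2)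
  have hup_int := intervalIntegrable_log_neg_log
  rw [intervalIntegrable_iff_integrableOn_Ioo_of_le zero_le_one] at hlow_int hup_int ⊢
  refine integrable_of_le_of_le
    ((hL.log fun x hx ↦ ((hpos hx).trans_le (hlow x hx)).ne').aestronglyMeasurable
      measurableSet_Ioo) ?_ ?_ hlow_int hup_int
  · filter_upwards [ae_restrict_mem measurableSet_Ioo] with x hx
    calc log c + 2 * log (1 - x)
      _ = log (c * (1 - x) ^ 2) := by
          rw [Real.log_mul hc.ne' (pow_ne_zero 2 (sub_pos.2 hx.2).ne'), Real.log_pow, Nat.cast_two]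
      _ ≤ log (L x) := Real.log_le_log (hpos hx) (hlow x hx)
  · filter_upwards [ae_restrict_mem measurableSet_Ioo] with x hx
    exact Real.log_le_log ((hpos hx).trans_le (hlow x hx)) (hup x hx)

theorem sub_le_log_div {x y : ℝ} (hx : 0 < x) (hxy : x ≤ y) (hy : y ≤ 1) :
    y - x ≤ log (y / x) := by
  have hy0 : 0 < y := hx.trans_le hxy
  calc y - x
    _ ≤ (y - x) / y := le_div_self (sub_nonneg.2 hxy) hy0 hy
    _ = 1 - (y / x)⁻¹ := by rw [inv_div, sub_div, div_self hy0.ne']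
    _ ≤ log (y / x) := Real.one_sub_inv_le_log_of_pos (div_pos hy0 hx)

theorem intervalIntegrable_log_log_genFun_div (hp : ∀ k, 0 ≤ p k) (hp1 : HasSum p 1)
    (hself : ∀ x ∈ Ioo (0 : ℝ) 1, x < genFun p x) :
    IntervalIntegrable (fun x ↦ log (log (genFun p x / x))) volume 0 1 := by
  obtain ⟨hmean, hmean1⟩ := mean_le_one_of_self_le_genFun hp hp1 fun x hx ↦ (hself x hx).le
  have hp0 : p 0 ≠ 0 := fun h ↦ by
    have hhalf : (1 / 2 : ℝ) ∈ Ioo (0 : ℝ) 1 := by norm_num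
    exact (hself _ hhalf).not_ge (genFun_le_self_of_zero hp hp1 h (Ioo_subset_Icc_self hhalf))
  have hpos {x : ℝ} (hx : x ∈ Ioo (0 : ℝ) 1) : 0 < genFun p x := hx.1.trans (hself x hx)
  have hle_one {x : ℝ} (hx : x ∈ Ioo (0 : ℝ) 1) : genFun p x ≤ 1 :=
    (genFun_le_tsum hp hp1.summable (Ioo_subset_Icc_self hx)).trans_eq hp1.tsum_eq
  refine intervalIntegrable_log_of_mul_sq_le_of_le_neg_log ((hp 0).lt_of_ne' hp0) ?_ ?_ ?_
  · have hcont : ContinuousOn (genFun p) (Ioo 0 1) :=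
      (continuousOn_genFun hp1.summable).mono
        ((Ioo_subset_Ioo_left (by norm_num)).trans Ioo_subset_Icc_self)
    exact (hcont.div continuousOn_id fun x hx ↦ hx.1.ne').log fun x hx ↦
      (div_pos (hpos hx) hx.1).ne'
  · intro x hx
    exact (mul_one_sub_sq_le_genFun_sub_self hp hp1 hmean hmean1 (Ioo_subset_Icc_self hx)).trans
      (sub_le_log_div hx.1 (hself x hx).le (hle_one hx))
  · intro x hx
    rw [← Real.log_inv, inv_eq_one_div]
    exact Real.log_le_log (div_pos (hpos hx) hx.1)
      (div_le_div_of_nonneg_right (hle_one hx) hx.1.le)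

theorem self_lt_genFun_of_fixed {q : ℕ → ℝ} (hp : ∀ k, 0 ≤ p k) (hp1 : HasSum p 1)
    (hq0 : q 0 = 0) (hq1 : HasSum q 1)
    (hfix : ∀ z ∈ Ioo (0 : ℝ) 1, genFun q z = z * genFun p (genFun q z)) {x : ℝ}
    (hx : x ∈ Ioo (0 : ℝ) 1) : x < genFun p x := by
  have hcont : ContinuousOn (genFun q) (Icc 0 1) :=
    uIcc_of_le (zero_le_one' ℝ) ▸ continuousOn_genFun_uIcc_zero_one hq1.summable
  obtain ⟨z, hz, rfl⟩ : x ∈ genFun q '' Ioo 0 1 :=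
    intermediate_value_Ioo zero_le_one hcont (by rwa [genFun_zero, genFun_one, hq0, hq1.tsum_eq])
  calc genFun q z
    _ = z * genFun p (genFun q z) := hfix z hz
    _ < genFun p (genFun q z) := mul_lt_of_lt_one_left
        (genFun_pos hp (hp1.tsum_eq ▸ zero_lt_one) ⟨hx.1, hx.2.le⟩) hz.2

end Offspring

theorem stmt6_general {p q : ℕ → ℝ} (hp : ∀ k, 0 ≤ p k) (hp1 : HasSum p 1) (hq : ∀ n, 0 ≤ q n)
    (hq0 : q 0 = 0) (hq1 : HasSum q 1)
    (hfix : ∀ z ∈ Ioo (0 : ℝ) 1, genFun q z = z * genFun p (genFun q z)) :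
    HasSum (fun n ↦ q n * log n)
      (-eulerMascheroniConstant - ∫ η in (0 : ℝ)..1, log (log (genFun p η / η))) := by
  set g : ℝ → ℝ := fun η ↦ log (log (genFun p η / η))
  have hcomp : EqOn (fun z ↦ g (genFun q z) * deriv (genFun q) z)
      (fun z ↦ log (-log z) * deriv (genFun q) z) (Ioo 0 1) := by
    intro z hz
    have hy : 0 < genFun q z := genFun_pos hq (hq1.tsum_eq ▸ zero_lt_one) ⟨hz.1, hz.2.le⟩
    have hinv : genFun p (genFun q z) / genFun q z = z⁻¹ := by
      rw [div_eq_iff hy.ne', eq_inv_mul_iff_mul_eq₀ hz.1.ne', ← hfix z hz]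
    simp only [g, hinv, Real.log_inv]
  have hg : IntervalIntegrable g volume (q 0) (∑' n, q n) := by
    rw [hq0, hq1.tsum_eq]
    exact intervalIntegrable_log_log_genFun_div hp hp1 fun x ↦
      self_lt_genFun_of_fixed hp hp1 hq0 hq1 hfix
  have hint := ((intervalIntegrable_comp_genFun_mul_deriv_iff hq hq1.summable).2 hg).congr_uIoo
    (uIoo_of_le (zero_le_one' ℝ) ▸ hcomp)
  have hsum := hasSum_mul_log_of_intervalIntegrable hq hq1.summable hq0 hint
  rwa [← intervalIntegral.integral_congr_Ioo_of_le zero_le_one hcomp,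
    integral_comp_genFun_mul_deriv hq hq1.summable, hq0, hq1.tsum_eq, mul_one] at hsum

/-- For a critical offspring distribution with variance `σ² ∈ (0,∞)` and pgf
`Φ`, the quantity `μ' = ∑ q_n log n` is finite and equals
`−γ − ∫_0^1 log log(Φ(η)/η) dη`, where `γ` is Euler's constant. -/
theorem stmt6
    (p : ℕ → ℝ) (hp : ∀ k, 0 ≤ p k)
    (hpsum : ∑' k, p k = 1)
    (hcrit : ∑' k : ℕ, (k : ℝ) * p k = 1)
    (hσfin : Summable (fun k : ℕ => (k : ℝ) * ((k : ℝ) - 1) * p k))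
    (hσpos : 0 < ∑' k : ℕ, (k : ℝ) * ((k : ℝ) - 1) * p k)
    (q : ℕ → ℝ) (hq0 : q 0 = 0) (hqnn : ∀ n, 0 ≤ q n)
    (hqsum : ∑' n, q n = 1)
    (hfix : ∀ z ∈ Set.Icc (0:ℝ) 1,
      (∑' n, q n * z ^ n) = z * ∑' k, p k * (∑' n, q n * z ^ n) ^ k) :
    Summable (fun n : ℕ => q n * Real.log n) ∧
    (∑' n : ℕ, q n * Real.log n) =
      - Real.eulerMascheroniConstant -
        ∫ η in (0:ℝ)..1, Real.log (Real.log ((∑' k, p k * η ^ k) / η)) := by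
  have hp1 : HasSum p 1 := hasSum_of_tsum_eq_of_ne_zero hpsum one_ne_zero
  have hq1 : HasSum q 1 := hasSum_of_tsum_eq_of_ne_zero hqsum one_ne_zero
  have h := stmt6_general hp hp1 hqnn hq0 hq1 fun z hz ↦ hfix z (Ioo_subset_Icc_self hz)
  exact ⟨h.summable, h.tsum_eq⟩
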